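/- For every symmetric additively-separable hedonic game, every integer k ≥ 2, and every threshold T_out ∈ [0,1], there exists an outcome p consisting of at most k coalitions such that no player i has a deviation — to another block of p, or to the empty set in case p has fewer than k nonempty blocks — that is both Nash feasible and vote-out feasible with threshold T_out (i.e., a vote-out stable outcome with at most k coalitions exists). -/

import Mathlib

/-!
Vote-out stability follows from Nash stability.  By symmetry of `w`, moving a single player `i`
to another coalition changes the total utility `potential w p` by exactly twice the change of the
utility of `i` (`potential_eq` isolates the part depending on the label of `i`).  Since there are
finitely many labellings, and at least one because `k > 0`, some labelling maximizes the potential,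
and in it no deviation is Nash feasible, whatever the vote-out threshold.
-/

/-!
`k`-coalition (k-VoteOut) setting: an outcome with at most `k` coalitions is
encoded as a labelling `p : V → Fin k` (fibres are the coalitions).  A deviation
of player `i` is the choice of a label `m ≠ p i`: a nonempty fibre is another
block of `p`, and an empty fibre (which exists exactly when fewer than `k` blocks
are nonempty) is the empty target coalition.  The deviation is Nash feasible if
the weight of `i` to the target coalition exceeds her current utility, and
vote-out feasible with threshold `T_out` if moreover `i` has no edge inside
`p(i) \ {i}` or at least a `T_out` fraction of those edges are negative.
-/

/-- Sum of weights from player `i` to the members of the coalition labelled `k`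
(excluding `i` herself); `coalSum w p i (p i)` is the utility of `i` under `p`. -/
def coalSum {V Λ : Type*} [Fintype V] [DecidableEq V] [DecidableEq Λ]
    (w : V → V → ℝ) (p : V → Λ) (i : V) (k : Λ) : ℝ :=
  ∑ j ∈ Finset.univ.filter (fun j => p j = k ∧ j ≠ i), w i j

/-- Number of edges of `i` to the coalition labelled `m` (excluding `i`). -/
noncomputable def edgeCount {V : Type*} {Λ : Type*} (w : V → V → ℝ)
    (p : V → Λ) (i : V) (m : Λ) : ℕ :=
  Nat.card {j : V // p j = m ∧ j ≠ i ∧ w i j ≠ 0}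

/-- Number of negative edges of `i` to the coalition labelled `m`. -/
noncomputable def negCount {V : Type*} {Λ : Type*} (w : V → V → ℝ)
    (p : V → Λ) (i : V) (m : Λ) : ℕ :=
  Nat.card {j : V // p j = m ∧ j ≠ i ∧ w i j < 0}

/-- Total utility of all players: the sum of `w a b` over ordered pairs in a common coalition. -/
def potential {V Λ : Type*} [Fintype V] [DecidableEq Λ] (w : V → V → ℝ) (p : V → Λ) : ℝ :=
  ∑ a, ∑ b, if p a = p b then w a b else 0

/-- The part of the potential coming from pairs that avoid player `i`. -/
def potentialOff {V Λ : Type*} [Fintype V] [DecidableEq V] [DecidableEq Λ]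
    (w : V → V → ℝ) (p : V → Λ) (i : V) : ℝ :=
  ∑ a ∈ Finset.univ.erase i, ∑ b ∈ Finset.univ.erase i, if p a = p b then w a b else 0

lemma coalSum_eq {V Λ : Type*} [Fintype V] [DecidableEq V] [DecidableEq Λ]
    (w : V → V → ℝ) (p : V → Λ) (i : V) (m : Λ) :
    coalSum w p i m = ∑ b ∈ Finset.univ.erase i, if m = p b then w i b else 0 := by
  rw [coalSum, ← Finset.sum_filter]
  congr 1
  ext b
  simp only [Finset.mem_filter, Finset.mem_erase, Finset.mem_univ, true_and, and_true]
  rw [and_comm, eq_comm]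

lemma potential_eq {V Λ : Type*} [Fintype V] [DecidableEq V] [DecidableEq Λ]
    (w : V → V → ℝ) (hsymm : ∀ i j, w i j = w j i) (hzero : ∀ i, w i i = 0)
    (p : V → Λ) (i : V) :
    potential w p = 2 * coalSum w p i (p i) + potentialOff w p i := by
  have key : ∀ f : V → ℝ, ∑ a, f a = f i + ∑ a ∈ Finset.univ.erase i, f a := fun f =>
    (Finset.add_sum_erase _ f (Finset.mem_univ i)).symm
  have hcol : ∑ a ∈ Finset.univ.erase i, (if p a = p i then w a i else 0)
      = coalSum w p i (p i) := by
    rw [coalSum_eq]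
    refine Finset.sum_congr rfl fun a _ => ?_
    simp only [hsymm a i, eq_comm]
  simp only [potential, potentialOff, key, Finset.sum_add_distrib]
  rw [hcol, ← coalSum_eq, hzero]
  simp only [ite_self]
  ring

/-- for every symmetric additively-separable hedonic game, every
`k ≥ 2` and every threshold `T_out ∈ [0,1]`, there is an outcome with at most `k`
coalitions in which no player has a deviation that is both Nash feasible and
vote-out feasible with threshold `T_out`. -/
theorem exists_kVoteOut_stable (V : Type*) [Fintype V] [DecidableEq V]
    (w : V → V → ℝ) (hsymm : ∀ i j, w i j = w j i) (hzero : ∀ i, w i i = 0)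
    (k : ℕ) (hk : 2 ≤ k) (Tout : ℝ) (hT0 : 0 ≤ Tout) (hT1 : Tout ≤ 1) :
    ∃ p : V → Fin k, ∀ (i : V) (m : Fin k), m ≠ p i →
      ¬ ((coalSum w p i (p i) < coalSum w p i m) ∧
          (edgeCount w p i (p i) = 0 ∨
            Tout * (edgeCount w p i (p i) : ℝ) ≤ (negCount w p i (p i) : ℝ))) := by
  have : Nonempty (Fin k) := ⟨⟨0, by omega⟩⟩
  obtain ⟨p, hp⟩ := Finite.exists_max (fun p : V → Fin k => potential w p)
  refine ⟨p, fun i m _ h => ?_⟩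
  have hmax := hp (Function.update p i m)
  have hc : coalSum w (Function.update p i m) i (Function.update p i m i) = coalSum w p i m := by
    simp only [coalSum_eq, Function.update_self]
    refine Finset.sum_congr rfl fun b hb => ?_
    rw [Function.update_of_ne (Finset.ne_of_mem_erase hb)]
  have ho : potentialOff w (Function.update p i m) i = potentialOff w p i := by
    refine Finset.sum_congr rfl fun a ha => Finset.sum_congr rfl fun b hb => ?_
    rw [Function.update_of_ne (Finset.ne_of_mem_erase ha),
      Function.update_of_ne (Finset.ne_of_mem_erase hb)]
  simp only [potential_eq w hsymm hzero _ i, hc, ho] at hmax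
  linarith [h.1]
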